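/- arXiv:2505.24117 — 2 statements merged into one kernel-verified Lean document; each statement's English description precedes it below -/
import Mathlib

section
/- Let Y, X, Z be random vectors in ℝ^p, ℝ^q, ℝ^r forming a Markov chain Y → X → Z, and let l : ℝ^p × ℝ^p → [0,∞) be a bounded Borel loss function with ‖l‖_∞ = sup_{y,y'} l(y,y') < ∞. Assume there exists a Borel-measurable f : ℝ^q → ℝ^p attaining L*_l(Y|X) = E[l(Y,f(X))]. Then for every α ∈ (0,1), L*_l(Y|Z) − L*_l(Y|X) ≤ (‖l‖_∞ / √2) · √( JS_α(P_{Y,X|Z} ‖ P_{Y|Z} ⊗ P_{X|Z} | P_Z) / (α(1−α)) ), where JS_α(P_{Y,X|Z} ‖ P_{Y|Z} ⊗ P_{X|Z} | P_Z) = E_{P_Z}[ JS_α(P_{Y,X|Z}(·|Z) ‖ P_{Y|Z}(·|Z) ⊗ P_{X|Z}(·|Z)) ]. -/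
open MeasureTheory ProbabilityTheory Topology
open scoped ENNReal

noncomputable section

/-- Minimum expected risk `L*_l(Y|X)` of estimating `Y` from `X` under the loss `l`:
the infimum over Borel-measurable estimators `f` of `E[l(Y, f(X))]`. -/
def minRisk {Ω : Type*} [MeasurableSpace Ω] (μ : Measure Ω) {p q : ℕ}
    (l : (Fin p → ℝ) → (Fin p → ℝ) → ℝ) (Y : Ω → Fin p → ℝ) (X : Ω → Fin q → ℝ) : ℝ≥0∞ :=
  ⨅ (f : (Fin q → ℝ) → Fin p → ℝ) (_ : Measurable f),
    ∫⁻ ω, ENNReal.ofReal (l (Y ω) (f (X ω))) ∂μ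

open Classical in
/-- Kullback–Leibler divergence with values in `ℝ≥0∞`: it equals `∫ log (dP/dQ) dP` when
`P ≪ Q` and the log-density is `P`-integrable, and `∞` otherwise. -/
def klDiv {β : Type*} [MeasurableSpace β] (P Q : Measure β) : ℝ≥0∞ :=
  if P ≪ Q ∧ Integrable (fun x => Real.log (P.rnDeriv Q x).toReal) P then
    ENNReal.ofReal (∫ x, Real.log (P.rnDeriv Q x).toReal ∂P)
  else ⊤

/-- α-Jensen–Shannon divergence:
`JS_α(P‖Q) = α D_KL(P ‖ αP + (1-α)Q) + (1-α) D_KL(Q ‖ αP + (1-α)Q)`.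
(The two KL divergences against the mixture are finite for `α ∈ (0,1)`.) -/
def jsDiv {β : Type*} [MeasurableSpace β] (a : ℝ) (P Q : Measure β) : ℝ :=
  a * (klDiv P (ENNReal.ofReal a • P + ENNReal.ofReal (1 - a) • Q)).toReal
    + (1 - a) * (klDiv Q (ENNReal.ofReal a • P + ENNReal.ofReal (1 - a) • Q)).toReal

/-!
Given an estimator `f` of `Y` from `X`, resample `X' ∼ P_{X|Z}` independently of `Y` given `Z`.
Then `f(X')` is a randomized estimator of `Y` from `Z`, so its risk is at least `L*(Y|Z)`. The risks
of `f(X)` and `f(X')` are the integrals of one function `(y, x) ↦ l(y, f(x))`, with values in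
`[0, M]`, against the averages over `P_Z` of `P_{Y,X|Z}` and of `P_{Y|Z} ⊗ P_{X|Z}`. For each value
of `Z`, Pinsker's inequality against the `α`-mixture of the two conditional laws bounds the squared
difference of the integrals by `M² / 2 · JS_α / (α(1 - α))`; Jensen's inequality then averages over
`Z`. Everything stays finite because `JS_α` is at most the binary entropy of `α`.

Pinsker's inequality itself follows from the Donsker–Varadhan inequality and Hoeffding's lemma: the
resulting quadratic polynomial in the tilting parameter is nonnegative, so its discriminant is not
positive.
-/

open Set
open InformationTheory (klFun klFun_apply klFun_nonneg measurable_klFun)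
open scoped NNReal

section KullbackLeibler

variable {β : Type*} [MeasurableSpace β] {P ν : Measure β} [IsProbabilityMeasure P]
  [IsProbabilityMeasure ν]

lemma klDiv_eq_informationTheory_klDiv : klDiv P ν = InformationTheory.klDiv P ν := by
  rw [klDiv, InformationTheory.klDiv]
  simp only [llr_def, probReal_univ, add_sub_cancel_right]
  congr

lemma klFun_add_self_le_mul_log_add_one {x b : ℝ} (hx : 0 ≤ x) (hxb : x ≤ b) :
    klFun x + x ≤ x * Real.log b + 1 := by
  rcases hx.eq_or_lt with rfl | hx
  · simp [klFun_apply]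
  · have := mul_le_mul_of_nonneg_left (Real.log_le_log hx hxb) hx.le
    rw [klFun_apply]
    linarith

lemma klDiv_le_ofReal_log_inv_of_smul_le {c : ℝ} (hc : 0 < c) (h : ENNReal.ofReal c • P ≤ ν) :
    InformationTheory.klDiv P ν ≤ ENNReal.ofReal (Real.log c⁻¹) := by
  have hac : P ≪ ν :=
    (Measure.absolutelyContinuous_smul (by simpa using hc)).trans h.absolutelyContinuous
  have hdensity : ∀ᵐ x ∂ν, P.rnDeriv ν x ≤ ENNReal.ofReal c⁻¹ := by
    filter_upwards [Measure.rnDeriv_smul_left_of_ne_top P ν (ENNReal.ofReal_ne_top (r := c)),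
      Measure.rnDeriv_le_one_of_le h] with x hsmul hle
    rw [hsmul] at hle
    rwa [ENNReal.ofReal_inv_of_pos hc, ENNReal.le_inv_iff_mul_le, mul_comm]
  have hmass : ∫⁻ x, P.rnDeriv ν x ∂ν = 1 := by
    rw [Measure.lintegral_rnDeriv hac, measure_univ]
  refine (ENNReal.add_le_add_iff_right ENNReal.one_ne_top).mp ?_
  calc InformationTheory.klDiv P ν + 1
      = ∫⁻ x, ENNReal.ofReal (klFun (P.rnDeriv ν x).toReal) + P.rnDeriv ν x ∂ν := by
        rw [lintegral_add_right _ (Measure.measurable_rnDeriv P ν), hmass,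
          InformationTheory.klDiv_eq_lintegral_klFun_of_ac hac]
    _ ≤ ∫⁻ x, P.rnDeriv ν x * ENNReal.ofReal (Real.log c⁻¹) + 1 ∂ν := by
        refine lintegral_mono_ae ?_
        filter_upwards [hdensity] with x hx
        obtain ⟨t, ht, htx⟩ : ∃ t : ℝ, 0 ≤ t ∧ ENNReal.ofReal t = P.rnDeriv ν x :=
          ⟨_, ENNReal.toReal_nonneg,
            ENNReal.ofReal_toReal (ne_top_of_le_ne_top ENNReal.ofReal_ne_top hx)⟩
        rw [← htx, ENNReal.ofReal_le_ofReal_iff (inv_pos.mpr hc).le] at hx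
        rw [← htx, ENNReal.toReal_ofReal ht, ← ENNReal.ofReal_add (klFun_nonneg ht) ht,
          ← ENNReal.ofReal_mul ht, ← ENNReal.ofReal_one]
        exact (ENNReal.ofReal_le_ofReal (klFun_add_self_le_mul_log_add_one ht hx)).trans
          ENNReal.ofReal_add_le
    _ = ENNReal.ofReal (Real.log c⁻¹) + 1 := by
        rw [lintegral_add_right _ measurable_const,
          lintegral_mul_const _ (Measure.measurable_rnDeriv P ν), hmass]
        simp

/-- Donsker–Varadhan: Gibbs' inequality for `P` against the tilt of `ν` by `g`. -/
lemma integral_le_toReal_klDiv_add_log_integral_exp (hKL : InformationTheory.klDiv P ν ≠ ⊤)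
    {g : β → ℝ} (hgP : Integrable g P) (hgν : Integrable (fun x ↦ Real.exp (g x)) ν) :
    ∫ x, g x ∂P ≤ (InformationTheory.klDiv P ν).toReal + Real.log (∫ x, Real.exp (g x) ∂ν) := by
  obtain ⟨hac, hllr⟩ := InformationTheory.klDiv_ne_top_iff.mp hKL
  have := isProbabilityMeasure_tilted hgν
  have htilted := integral_llr_tilted_right hac hgP hgν hllr
  have hgibbs := InformationTheory.integral_llr_add_sub_measure_univ_nonneg
    (hac.trans (absolutelyContinuous_tilted hgν)) (integrable_llr_tilted_right hac hgP hllr hgν)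
  rw [InformationTheory.toReal_klDiv_of_measure_eq hac (by simp)]
  simp only [probReal_univ] at hgibbs
  linarith

lemma sq_integral_le_klDiv_of_hasSubgaussianMGF (hKL : InformationTheory.klDiv P ν ≠ ⊤)
    {g : β → ℝ} {c : ℝ≥0} (hg : HasSubgaussianMGF g c ν) (hgP : Integrable g P) :
    (∫ x, g x ∂P) ^ 2 ≤ 2 * c * (InformationTheory.klDiv P ν).toReal := by
  have hquadratic (t : ℝ) : 0 ≤ c / 2 * (t * t) + -(∫ x, g x ∂P) * t
      + (InformationTheory.klDiv P ν).toReal := by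
    have hDV := integral_le_toReal_klDiv_add_log_integral_exp hKL (hgP.const_mul t)
      (hg.integrable_exp_mul t)
    have hcgf : Real.log (∫ x, Real.exp (t * g x) ∂ν) ≤ c * t ^ 2 / 2 := hg.cgf_le t
    rw [integral_const_mul] at hDV
    linarith
  have := discrim_le_zero hquadratic
  rw [discrim] at this
  linarith

lemma sq_integral_sub_integral_le_klDiv (hKL : InformationTheory.klDiv P ν ≠ ⊤)
    {g : β → ℝ} {a b : ℝ} (hg : Measurable g) (hgab : ∀ x, g x ∈ Icc a b) :
    (∫ x, g x ∂P - ∫ x, g x ∂ν) ^ 2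
      ≤ (b - a) ^ 2 / 2 * (InformationTheory.klDiv P ν).toReal := by
  have hgP : Integrable g P := .of_mem_Icc a b hg.aemeasurable (ae_of_all _ hgab)
  have h := sq_integral_le_klDiv_of_hasSubgaussianMGF hKL
    (hasSubgaussianMGF_of_mem_Icc hg.aemeasurable (ae_of_all ν hgab))
    (hgP.sub (integrable_const _))
  rw [integral_sub hgP (integrable_const _), integral_const, probReal_univ, one_smul] at h
  refine h.trans_eq ?_
  simp only [NNReal.coe_pow, NNReal.coe_div, coe_nnnorm, NNReal.coe_ofNat, div_pow,
    Real.norm_eq_abs, sq_abs]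
  ring

end KullbackLeibler

section JensenShannon

variable {β : Type*} [MeasurableSpace β] {α : ℝ}

/-- The mixture `αP + (1 - α)Q` against which `jsDiv` compares `P` and `Q`. -/
def mixture (α : ℝ) (P Q : Measure β) : Measure β :=
  ENNReal.ofReal α • P + ENNReal.ofReal (1 - α) • Q

lemma measurable_mixture : Measurable fun PQ : Measure β × Measure β ↦ mixture α PQ.1 PQ.2 := by
  refine Measure.measurable_of_measurable_coe _ fun s hs ↦ ?_
  simp only [mixture, Measure.add_apply, Measure.smul_apply, smul_eq_mul]
  have hcoe := Measure.measurable_coe hs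
  exact ((hcoe.comp measurable_fst).const_mul _).add ((hcoe.comp measurable_snd).const_mul _)

lemma jsDiv_nonneg (P Q : Measure β) (hα : α ∈ Icc (0 : ℝ) 1) : 0 ≤ jsDiv α P Q := by
  have := hα.1
  have := sub_nonneg.mpr hα.2
  unfold jsDiv
  positivity

lemma integral_mixture {P Q : Measure β} (hα : α ∈ Icc (0 : ℝ) 1) {g : β → ℝ}
    (hgP : Integrable g P) (hgQ : Integrable g Q) :
    ∫ x, g x ∂mixture α P Q = α * ∫ x, g x ∂P + (1 - α) * ∫ x, g x ∂Q := by
  rw [mixture, integral_add_measure (hgP.smul_measure ENNReal.ofReal_ne_top)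
    (hgQ.smul_measure ENNReal.ofReal_ne_top), integral_smul_measure, integral_smul_measure,
    ENNReal.toReal_ofReal hα.1, ENNReal.toReal_ofReal (sub_nonneg.mpr hα.2), smul_eq_mul,
    smul_eq_mul]

variable (P Q : Measure β) [IsProbabilityMeasure P] [IsProbabilityMeasure Q]

lemma isProbabilityMeasure_mixture (hα : α ∈ Icc (0 : ℝ) 1) :
    IsProbabilityMeasure (mixture α P Q) where
  measure_univ := by
    simp [mixture, ← ENNReal.ofReal_add hα.1 (sub_nonneg.mpr hα.2)]

lemma klDiv_mixture_left_le (hα : α ∈ Ioo (0 : ℝ) 1) :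
    InformationTheory.klDiv P (mixture α P Q) ≤ ENNReal.ofReal (Real.log α⁻¹) :=
  have := isProbabilityMeasure_mixture P Q (Ioo_subset_Icc_self hα)
  klDiv_le_ofReal_log_inv_of_smul_le hα.1 (Measure.le_add_right le_rfl)

lemma klDiv_mixture_right_le (hα : α ∈ Ioo (0 : ℝ) 1) :
    InformationTheory.klDiv Q (mixture α P Q) ≤ ENNReal.ofReal (Real.log (1 - α)⁻¹) :=
  have := isProbabilityMeasure_mixture P Q (Ioo_subset_Icc_self hα)
  klDiv_le_ofReal_log_inv_of_smul_le (sub_pos.mpr hα.2) (Measure.le_add_left le_rfl)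

lemma jsDiv_eq_toReal_klDiv_mixture (hα : α ∈ Icc (0 : ℝ) 1) :
    jsDiv α P Q = α * (InformationTheory.klDiv P (mixture α P Q)).toReal
      + (1 - α) * (InformationTheory.klDiv Q (mixture α P Q)).toReal := by
  have := isProbabilityMeasure_mixture P Q hα
  rw [← klDiv_eq_informationTheory_klDiv, ← klDiv_eq_informationTheory_klDiv, jsDiv, mixture]

lemma jsDiv_le_binEntropy (hα : α ∈ Ioo (0 : ℝ) 1) : jsDiv α P Q ≤ Real.binEntropy α := by
  have hα₀ : 0 ≤ α := hα.1.le
  have hα' : 0 < 1 - α := sub_pos.mpr hα.2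
  rw [jsDiv_eq_toReal_klDiv_mixture P Q (Ioo_subset_Icc_self hα), Real.binEntropy]
  gcongr
  · exact ENNReal.toReal_le_of_le_ofReal
      (Real.log_nonneg ((one_le_inv₀ hα.1).mpr hα.2.le)) (klDiv_mixture_left_le P Q hα)
  · exact ENNReal.toReal_le_of_le_ofReal
      (Real.log_nonneg ((one_le_inv₀ hα').mpr (by linarith [hα.1]))) (klDiv_mixture_right_le P Q hα)

/-- Pinsker's inequality bounds the two terms of `jsDiv` by `(1 - α)²` and `α²` times the squared
gap, because the mixture divides the gap between `P` and `Q` in the ratio `1 - α : α`. -/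
lemma sq_integral_sub_integral_le_jsDiv (hα : α ∈ Ioo (0 : ℝ) 1) {g : β → ℝ} {a b : ℝ}
    (hg : Measurable g) (hgab : ∀ x, g x ∈ Icc a b) :
    (∫ x, g x ∂Q - ∫ x, g x ∂P) ^ 2 ≤ (b - a) ^ 2 / 2 * (jsDiv α P Q / (α * (1 - α))) := by
  have hα₀ : 0 ≤ α := hα.1.le
  have hα' : 0 < 1 - α := sub_pos.mpr hα.2
  have := isProbabilityMeasure_mixture P Q (Ioo_subset_Icc_self hα)
  have hP := sq_integral_sub_integral_le_klDiv
    (ne_top_of_le_ne_top ENNReal.ofReal_ne_top (klDiv_mixture_left_le P Q hα)) hg hgab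
  have hQ := sq_integral_sub_integral_le_klDiv
    (ne_top_of_le_ne_top ENNReal.ofReal_ne_top (klDiv_mixture_right_le P Q hα)) hg hgab
  rw [integral_mixture (Ioo_subset_Icc_self hα)
    (.of_mem_Icc a b hg.aemeasurable (ae_of_all _ hgab))
    (.of_mem_Icc a b hg.aemeasurable (ae_of_all _ hgab))] at hP hQ
  rw [mul_div_assoc', le_div_iff₀ (mul_pos hα.1 hα'),
    jsDiv_eq_toReal_klDiv_mixture P Q (Ioo_subset_Icc_self hα)]
  linear_combination α * hP + (1 - α) * hQ

end JensenShannon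

section Kernel

lemma sq_integral_le_integral_sq {γ : Type*} [MeasurableSpace γ] {ν : Measure γ}
    [IsProbabilityMeasure ν] {d : γ → ℝ} (hd : Integrable d ν)
    (hd_sq : Integrable (fun z ↦ d z ^ 2) ν) : (∫ z, d z ∂ν) ^ 2 ≤ ∫ z, d z ^ 2 ∂ν :=
  even_two.convexOn_pow.map_integral_le (continuous_pow 2).continuousOn isClosed_univ (by simp) hd
    hd_sq

variable {γ β : Type*} [MeasurableSpace γ] [MeasurableSpace β]

section Bochner

variable {E : Type*} [NormedAddCommGroup E] [NormedSpace ℝ E] {κ : Kernel γ β} {ν : Measure γ}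
  {g : β → E}

lemma integrable_integral_of_integrable_comp (hg : Integrable g (κ ∘ₘ ν)) :
    Integrable (fun z ↦ ∫ x, g x ∂κ z) ν := by
  rw [Measure.comp_eq_comp_const_apply] at hg
  exact hg.integral_comp

lemma integral_measure_comp (hg : Integrable g (κ ∘ₘ ν)) :
    ∫ x, g x ∂(κ ∘ₘ ν) = ∫ z, ∫ x, g x ∂κ z ∂ν := by
  rw [Measure.comp_eq_comp_const_apply] at hg ⊢
  rw [Kernel.integral_comp hg, Kernel.const_apply]

end Bochner

variable [MeasurableSpace.CountableOrCountablyGenerated γ β]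

lemma measurable_klDiv_kernel (κ η : Kernel γ β) [IsFiniteKernel κ] [IsFiniteKernel η]
    (hac : ∀ z, κ z ≪ η z) : Measurable fun z ↦ InformationTheory.klDiv (κ z) (η z) := by
  have hklFun (z : γ) : InformationTheory.klDiv (κ z) (η z)
      = ∫⁻ x, ENNReal.ofReal (klFun (κ.rnDeriv η z x).toReal) ∂η z := by
    rw [InformationTheory.klDiv_eq_lintegral_klFun_of_ac (hac z)]
    refine lintegral_congr_ae ?_
    filter_upwards [κ.rnDeriv_eq_rnDeriv_measure (η := η) (a := z)] with x hx
    rw [hx]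
  simp_rw [hklFun]
  exact Measurable.lintegral_kernel_prod_right
    (measurable_klFun.comp (Kernel.measurable_rnDeriv κ η).ennreal_toReal).ennreal_ofReal

variable (κ η : Kernel γ β) [IsMarkovKernel κ] [IsMarkovKernel η] {α : ℝ}

lemma measurable_jsDiv_kernel (hα : α ∈ Ioo (0 : ℝ) 1) :
    Measurable fun z ↦ jsDiv α (κ z) (η z) := by
  let ξ : Kernel γ β :=
    ⟨fun z ↦ mixture α (κ z) (η z), measurable_mixture.comp (κ.measurable.prodMk η.measurable)⟩
  have : IsMarkovKernel ξ :=
    ⟨fun z ↦ isProbabilityMeasure_mixture (κ z) (η z) (Ioo_subset_Icc_self hα)⟩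
  have hκ : Measurable fun z ↦ InformationTheory.klDiv (κ z) (mixture α (κ z) (η z)) :=
    measurable_klDiv_kernel κ ξ fun z ↦ (InformationTheory.klDiv_ne_top_iff.mp
      (ne_top_of_le_ne_top ENNReal.ofReal_ne_top (klDiv_mixture_left_le (κ z) (η z) hα))).1
  have hη : Measurable fun z ↦ InformationTheory.klDiv (η z) (mixture α (κ z) (η z)) :=
    measurable_klDiv_kernel η ξ fun z ↦ (InformationTheory.klDiv_ne_top_iff.mp
      (ne_top_of_le_ne_top ENNReal.ofReal_ne_top (klDiv_mixture_right_le (κ z) (η z) hα))).1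
  simp_rw [jsDiv_eq_toReal_klDiv_mixture _ _ (Ioo_subset_Icc_self hα)]
  exact (hκ.ennreal_toReal.const_mul _).add (hη.ennreal_toReal.const_mul _)

variable (ν : Measure γ) [IsProbabilityMeasure ν]

lemma integrable_jsDiv_kernel (hα : α ∈ Ioo (0 : ℝ) 1) :
    Integrable (fun z ↦ jsDiv α (κ z) (η z)) ν :=
  .of_mem_Icc 0 (Real.binEntropy α) (measurable_jsDiv_kernel κ η hα).aemeasurable <|
    ae_of_all _ fun _ ↦ ⟨jsDiv_nonneg _ _ (Ioo_subset_Icc_self hα), jsDiv_le_binEntropy _ _ hα⟩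

lemma sq_integral_comp_sub_integral_comp_le_jsDiv (hα : α ∈ Ioo (0 : ℝ) 1) {g : β → ℝ}
    {a b : ℝ} (hg : Measurable g) (hgab : ∀ x, g x ∈ Icc a b) :
    (∫ x, g x ∂(η ∘ₘ ν) - ∫ x, g x ∂(κ ∘ₘ ν)) ^ 2
      ≤ (b - a) ^ 2 / 2 * ((∫ z, jsDiv α (κ z) (η z) ∂ν) / (α * (1 - α))) := by
  have hκ : Integrable g (κ ∘ₘ ν) := .of_mem_Icc a b hg.aemeasurable (ae_of_all _ hgab)
  have hη : Integrable g (η ∘ₘ ν) := .of_mem_Icc a b hg.aemeasurable (ae_of_all _ hgab)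
  have hκ_int := integrable_integral_of_integrable_comp hκ
  have hη_int := integrable_integral_of_integrable_comp hη
  have hpinsker (z : γ) := sq_integral_sub_integral_le_jsDiv (κ z) (η z) hα hg hgab
  have hjs := ((integrable_jsDiv_kernel κ η ν hα).div_const (α * (1 - α))).const_mul
    ((b - a) ^ 2 / 2)
  have hgap_sq : Integrable (fun z ↦ (∫ x, g x ∂η z - ∫ x, g x ∂κ z) ^ 2) ν :=
    hjs.mono' ((hη_int.sub hκ_int).aestronglyMeasurable.pow 2) <| ae_of_all _ fun z ↦ by
      rw [Real.norm_of_nonneg (sq_nonneg _)]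
      exact hpinsker z
  calc (∫ x, g x ∂(η ∘ₘ ν) - ∫ x, g x ∂(κ ∘ₘ ν)) ^ 2
      = (∫ z, (∫ x, g x ∂η z - ∫ x, g x ∂κ z) ∂ν) ^ 2 := by
        rw [integral_measure_comp hη, integral_measure_comp hκ, integral_sub hη_int hκ_int]
    _ ≤ ∫ z, (∫ x, g x ∂η z - ∫ x, g x ∂κ z) ^ 2 ∂ν :=
        sq_integral_le_integral_sq (hη_int.sub hκ_int) hgap_sq
    _ ≤ ∫ z, (b - a) ^ 2 / 2 * (jsDiv α (κ z) (η z) / (α * (1 - α))) ∂ν :=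
        integral_mono hgap_sq hjs hpinsker
    _ = (b - a) ^ 2 / 2 * ((∫ z, jsDiv α (κ z) (η z) ∂ν) / (α * (1 - α))) := by
        rw [integral_const_mul, integral_div]

lemma lintegral_comp_le_lintegral_comp_add_sqrt_jsDiv (hα : α ∈ Ioo (0 : ℝ) 1) {g : β → ℝ}
    {M : ℝ} (hg : Measurable g) (hgM : ∀ x, g x ∈ Icc 0 M) :
    ∫⁻ x, ENNReal.ofReal (g x) ∂(η ∘ₘ ν) ≤ ∫⁻ x, ENNReal.ofReal (g x) ∂(κ ∘ₘ ν)
      + ENNReal.ofReal (M / √2 * √((∫ z, jsDiv α (κ z) (η z) ∂ν) / (α * (1 - α)))) := by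
  obtain ⟨x⟩ := nonempty_of_isProbabilityMeasure (κ ∘ₘ ν)
  have hM : 0 ≤ M := (hgM x).1.trans (hgM x).2
  have hgap := Real.le_sqrt_of_sq_le
    (sq_integral_comp_sub_integral_comp_le_jsDiv κ η ν hα hg hgM)
  rw [sub_zero, Real.sqrt_mul (by positivity), Real.sqrt_div (sq_nonneg M), Real.sqrt_sq hM,
    sub_le_iff_le_add'] at hgap
  rw [← ofReal_integral_eq_lintegral_ofReal, ← ofReal_integral_eq_lintegral_ofReal]
  · exact (ENNReal.ofReal_le_ofReal hgap).trans ENNReal.ofReal_add_le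
  · exact .of_mem_Icc 0 M hg.aemeasurable (ae_of_all _ hgM)
  · exact ae_of_all _ fun x ↦ (hgM x).1
  · exact .of_mem_Icc 0 M hg.aemeasurable (ae_of_all _ hgM)
  · exact ae_of_all _ fun x ↦ (hgM x).1

end Kernel

section MinimumRisk

variable {Ω 𝓨 𝓧 𝓩 𝓐 : Type*} [MeasurableSpace Ω] [MeasurableSpace 𝓧] [MeasurableSpace 𝓩]
  [MeasurableSpace 𝓐] (μ : Measure Ω)

/-- The minimum expected loss of an action chosen as a measurable function of `X` when the unknown
state is `Y`: this is `minRisk` for arbitrary state, observation and action spaces, with the loss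
taking values in `ℝ≥0∞`. -/
def minExpectedLoss (L : 𝓨 → 𝓐 → ℝ≥0∞) (Y : Ω → 𝓨) (X : Ω → 𝓧) : ℝ≥0∞ :=
  ⨅ (g : 𝓧 → 𝓐) (_ : Measurable g), ∫⁻ ω, L (Y ω) (g (X ω)) ∂μ

variable {L : 𝓨 → 𝓐 → ℝ≥0∞} {Y : Ω → 𝓨} {X : Ω → 𝓧} {Z : Ω → 𝓩}

lemma minExpectedLoss_le_minExpectedLoss_comp {f : 𝓧 → 𝓐} (hf : Measurable f) :
    minExpectedLoss μ L Y Z ≤ minExpectedLoss μ (fun y x ↦ L y (f x)) Y Z :=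
  le_iInf₂ fun g hg ↦ iInf₂_le (f ∘ g) (hf.comp hg)

variable [MeasurableSpace 𝓨]

/-- Randomized estimators do no better than deterministic ones: a Markov kernel is the law of a
function of the observation and an independent uniform seed, and some value of the seed does at
least as well as the average. -/
lemma minExpectedLoss_le_lintegral_kernel [SFinite μ] [StandardBorelSpace 𝓐] [Nonempty 𝓐]
    (hL : Measurable (Function.uncurry L)) (hY : Measurable Y) (hZ : Measurable Z)
    (κ : Kernel 𝓩 𝓐) [IsMarkovKernel κ] :
    minExpectedLoss μ L Y Z ≤ ∫⁻ ω, ∫⁻ a, L (Y ω) a ∂κ (Z ω) ∂μ := by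
  obtain ⟨h, hh, hκ⟩ := κ.exists_measurable_map_eq_unitInterval
  calc minExpectedLoss μ L Y Z
      = ∫⁻ _ : unitInterval, minExpectedLoss μ L Y Z := by simp
    _ ≤ ∫⁻ u : unitInterval, (∫⁻ ω, L (Y ω) (h (Z ω) u) ∂μ) :=
        lintegral_mono fun u ↦ iInf₂_le (fun z ↦ h z u) hh.of_uncurry_right
    _ = ∫⁻ ω, (∫⁻ u : unitInterval, L (Y ω) (h (Z ω) u)) ∂μ := by
        refine lintegral_lintegral_swap (Measurable.aemeasurable ?_)
        exact hL.comp ((hY.comp measurable_snd).prodMk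
          (hh.comp ((hZ.comp measurable_snd).prodMk measurable_fst)))
    _ = ∫⁻ ω, ∫⁻ a, L (Y ω) a ∂κ (Z ω) ∂μ := by
        refine lintegral_congr fun ω ↦ ?_
        rw [← hκ, lintegral_map hL.of_uncurry_left hh.of_uncurry_left]

lemma lintegral_condDistrib_prod_comp_map [IsFiniteMeasure μ] [StandardBorelSpace 𝓨] [Nonempty 𝓨]
    (hY : Measurable Y) (hZ : Measurable Z) (κ : Kernel 𝓩 𝓧) [IsSFiniteKernel κ]
    {F : 𝓨 × 𝓧 → ℝ≥0∞} (hF : Measurable F) :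
    ∫⁻ w, F w ∂((condDistrib Y Z μ ×ₖ κ) ∘ₘ μ.map Z) = ∫⁻ ω, ∫⁻ x, F (Y ω, x) ∂κ (Z ω) ∂μ := by
  have hinner : Measurable fun zy : 𝓩 × 𝓨 ↦ ∫⁻ x, F (zy.2, x) ∂κ zy.1 := by
    exact Measurable.lintegral_kernel_prod_right (κ := κ.comap Prod.fst measurable_fst)
      (by fun_prop)
  rw [Measure.lintegral_bind (Kernel.aemeasurable _) hF.aemeasurable]
  simp_rw [Kernel.lintegral_prod _ _ _ hF]
  rw [← Measure.lintegral_compProd hinner, compProd_map_condDistrib hY.aemeasurable,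
    lintegral_map hinner (hZ.prodMk hY)]

end MinimumRisk

theorem excess_risk_js_bound_bounded_loss_general
    {Ω 𝓨 𝓧 𝓩 𝓐 : Type*} [MeasurableSpace Ω] [MeasurableSpace 𝓨] [StandardBorelSpace 𝓨]
    [Nonempty 𝓨] [MeasurableSpace 𝓧] [StandardBorelSpace 𝓧] [Nonempty 𝓧] [MeasurableSpace 𝓩]
    [MeasurableSpace 𝓐] (μ : Measure Ω) [IsProbabilityMeasure μ]
    {Y : Ω → 𝓨} {X : Ω → 𝓧} {Z : Ω → 𝓩} (hY : Measurable Y) (hX : Measurable X)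
    (hZ : Measurable Z) {l : 𝓨 → 𝓐 → ℝ} (hl : Measurable (Function.uncurry l)) {M : ℝ}
    (hlM : ∀ y a, l y a ∈ Icc 0 M) {α : ℝ} (hα : α ∈ Ioo (0 : ℝ) 1) :
    minExpectedLoss μ (fun y a ↦ ENNReal.ofReal (l y a)) Y Z
      ≤ minExpectedLoss μ (fun y a ↦ ENNReal.ofReal (l y a)) Y X
        + ENNReal.ofReal (M / √2 * √((∫ z, jsDiv α (condDistrib (fun ω ↦ (Y ω, X ω)) Z μ z)
          ((condDistrib Y Z μ z).prod (condDistrib X Z μ z)) ∂(μ.map Z)) / (α * (1 - α)))) := by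
  refine tsub_le_iff_right.mp (le_iInf₂ fun f hf ↦ tsub_le_iff_right.mpr ?_)
  have := Measure.isProbabilityMeasure_map hZ.aemeasurable (μ := μ)
  have hloss : Measurable fun yx : 𝓨 × 𝓧 ↦ l yx.1 (f yx.2) :=
    hl.comp (measurable_fst.prodMk (hf.comp measurable_snd))
  have hgap := lintegral_comp_le_lintegral_comp_add_sqrt_jsDiv
    (condDistrib (fun ω ↦ (Y ω, X ω)) Z μ) (condDistrib Y Z μ ×ₖ condDistrib X Z μ) (μ.map Z) hα
    hloss fun yx ↦ hlM yx.1 (f yx.2)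
  rw [lintegral_condDistrib_prod_comp_map μ hY hZ _ hloss.ennreal_ofReal,
    condDistrib_comp_map hZ.aemeasurable (hY.prodMk hX).aemeasurable,
    lintegral_map hloss.ennreal_ofReal (hY.prodMk hX)] at hgap
  simp_rw [Kernel.prod_apply] at hgap
  exact ((minExpectedLoss_le_minExpectedLoss_comp μ hf).trans
    (minExpectedLoss_le_lintegral_kernel μ hloss.ennreal_ofReal hY hZ _)).trans hgap

/-- α-Jensen–Shannon bound on the excess minimum risk for bounded loss
functions: for a Markov chain `Y → X → Z`, a bounded Borel loss `l` with
`‖l‖_∞ = sup_{y,y'} l(y,y')`, and an optimal estimator `f` attaining `L*_l(Y|X)`, for every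
`α ∈ (0,1)`,
`L*_l(Y|Z) - L*_l(Y|X)
  ≤ (‖l‖_∞ / √2) √(JS_α(P_{Y,X|Z} ‖ P_{Y|Z} ⊗ P_{X|Z} | P_Z) / (α(1-α)))`. -/
theorem excess_risk_js_bound_bounded_loss
    {Ω : Type*} [MeasurableSpace Ω] [StandardBorelSpace Ω] [Nonempty Ω]
    (μ : Measure Ω) [IsProbabilityMeasure μ] {p q r : ℕ}
    (Y : Ω → Fin p → ℝ) (X : Ω → Fin q → ℝ) (Z : Ω → Fin r → ℝ)
    (hY : Measurable Y) (hX : Measurable X) (hZ : Measurable Z)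
    (l : (Fin p → ℝ) → (Fin p → ℝ) → ℝ)
    (hl : Measurable fun yy : (Fin p → ℝ) × (Fin p → ℝ) => l yy.1 yy.2)
    (hl0 : ∀ y y', 0 ≤ l y y')
    (hlbdd : BddAbove (Set.range fun yy : (Fin p → ℝ) × (Fin p → ℝ) => l yy.1 yy.2))
    (hMarkov : CondIndepFun (MeasurableSpace.comap X inferInstance) hX.comap_le Y Z μ)
    (f : (Fin q → ℝ) → Fin p → ℝ) (hf : Measurable f)
    (hopt : ∫⁻ ω, ENNReal.ofReal (l (Y ω) (f (X ω))) ∂μ = minRisk μ l Y X)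
    (α : ℝ) (hα : α ∈ Set.Ioo (0 : ℝ) 1) :
    minRisk μ l Y Z - minRisk μ l Y X
      ≤ ENNReal.ofReal ((⨆ yy : (Fin p → ℝ) × (Fin p → ℝ), l yy.1 yy.2) / Real.sqrt 2
          * Real.sqrt ((∫ z, jsDiv α (condDistrib (fun ω => (Y ω, X ω)) Z μ z)
              ((condDistrib Y Z μ z).prod (condDistrib X Z μ z)) ∂(μ.map Z))
            / (α * (1 - α)))) := by
  exact tsub_le_iff_left.mpr <| excess_risk_js_bound_bounded_loss_general μ hY hX hZ hl
    (fun y y' ↦ ⟨hl0 y y', le_ciSup hlbdd (y, y')⟩) hα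
end
end

section
/- Let Y, X, Z be random vectors in ℝ^p, ℝ^q, ℝ^r forming a Markov chain Y → X → Z, and let l : ℝ^p × ℝ^p → [0,∞) be a Borel loss function. Assume there exists a Borel-measurable f : ℝ^q → ℝ^p attaining L*_l(Y|X) = E[l(Y,f(X))], and a measurable σ² : ℝ^p → [0,∞) with E[σ²(Y)] < ∞ such that for P_{Y,Z}-almost every (y,z) the random variable l(y, f(X)) is σ²(y)-sub-Gaussian under P_{X|Z=z} and under P_{X|Z=z,Y=y}. If additionally I(X;Y) < ∞, then L*_l(Y|Z) − L*_l(Y|X) ≤ √( 2 E[σ²(Y)] · (I(X;Y) − I(Z;Y)) ). -/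
open MeasureTheory ProbabilityTheory Topology
open scoped ENNReal

noncomputable section

/-- Mutual information `I(U;V) = D_KL(P_{U,V} ‖ P_U ⊗ P_V)` of two random variables. -/
def mutualInfo {Ω 𝒰 𝒱 : Type*} [MeasurableSpace Ω] [MeasurableSpace 𝒰] [MeasurableSpace 𝒱]
    (μ : Measure Ω) (U : Ω → 𝒰) (V : Ω → 𝒱) : ℝ≥0∞ :=
  klDiv (μ.map fun ω => (U ω, V ω)) ((μ.map U).prod (μ.map V))

/-- `W` is `s2`-sub-Gaussian under the measure `ν`: `W` has finite mean and
`log E[exp (t (W - E[W]))] ≤ s2 t² / 2` for every real `t`. -/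
def SubGaussian {β : Type*} [MeasurableSpace β] (ν : Measure β) (W : β → ℝ)
    (s2 : ℝ) : Prop :=
  Integrable W ν ∧
    ∀ t : ℝ, Real.log (∫ x, Real.exp (t * (W x - ∫ x', W x' ∂ν)) ∂ν) ≤ s2 * t ^ 2 / 2

/-!
Let `P` be the law of `(t, x) = ((Z, Y), X)` and `Q` the law obtained by redrawing `X` from its
conditional distribution given `Z` alone, so that `X` and `Y` become conditionally independent
given `Z`. Then `D(P ‖ Q) = I(X; Y | Z)`, which equals `I(X; Y) - I(Z; Y)` for a Markov chain.

The loss `W = l(Y, f(X))` has conditional mean `M` under `Q`, and estimating `Y` by `f` of a point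
drawn from the law of `X` given `Z` is a randomised estimator of `Y` from `Z`, whose risk is
`E_P[M]`. Sub-Gaussianity gives `E_Q[exp (s (M - W) - s² σ² / 2)] ≤ 1` for `s ≥ 0`, so by
Donsker–Varadhan `s E_P[M - W] ≤ s² E[σ²] / 2 + D(P ‖ Q)`, and one optimises over `s`.

Only the lower tail of `W ≥ 0` enters, which is why all exponential moments are finite.
-/

section DonskerVaradhan

variable {β : Type*} [MeasurableSpace β] {P Q : Measure β} [IsFiniteMeasure P] [IsFiniteMeasure Q]

theorem mul_le_klFun_add_exp_sub_one {a : ℝ} (ha : 0 ≤ a) (g : ℝ) :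
    a * g ≤ InformationTheory.klFun a + (Real.exp g - 1) := by
  rcases ha.eq_or_lt with rfl | ha
  · simpa [InformationTheory.klFun_zero] using (Real.exp_pos g).le
  have hlog := Real.add_one_le_exp (g - Real.log a)
  rw [Real.exp_sub, Real.exp_log ha, le_div_iff₀ ha] at hlog
  rw [InformationTheory.klFun_apply]
  linarith

theorem integrable_of_le_of_integrable_exp (hKL : InformationTheory.klDiv P Q ≠ ∞) {f g : β → ℝ}
    (hg : Measurable g) (hf : Integrable f P) (hfg : f ≤ᵐ[P] g)
    (hexp : Integrable (fun x => Real.exp (g x)) Q) : Integrable g P := by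
  obtain ⟨hac, hllr⟩ := InformationTheory.klDiv_ne_top_iff.mp hKL
  have hkl := (InformationTheory.integrable_klFun_rnDeriv_iff hac).mpr hllr
  have hmax : Integrable (fun x => max (g x) 0) P := by
    rw [← integrable_rnDeriv_smul_iff hac]
    refine (hkl.add hexp).mono' (by fun_prop) (.of_forall fun x => ?_)
    have hr : 0 ≤ (P.rnDeriv Q x).toReal := ENNReal.toReal_nonneg
    have hyoung := mul_le_klFun_add_exp_sub_one hr (max (g x) 0)
    have hexp_max : Real.exp (max (g x) 0) - 1 ≤ Real.exp (g x) := by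
      rcases le_total (g x) 0 with h | h <;> simp [h, Real.exp_nonneg]
    rw [smul_eq_mul, Real.norm_of_nonneg (by positivity)]
    exact hyoung.trans (by simpa using hexp_max)
  exact integrable_of_le_of_le hg.aestronglyMeasurable hfg (.of_forall fun x => le_max_left _ _)
    hf hmax

theorem integral_le_toReal_klDiv_add_integral_exp_sub_one
    (hKL : InformationTheory.klDiv P Q ≠ ∞) {g : β → ℝ} (hg : Integrable g P)
    (hexp : Integrable (fun x => Real.exp (g x)) Q) :
    ∫ x, g x ∂P ≤ (InformationTheory.klDiv P Q).toReal + ∫ x, (Real.exp (g x) - 1) ∂Q := by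
  obtain ⟨hac, hllr⟩ := InformationTheory.klDiv_ne_top_iff.mp hKL
  have hkl := (InformationTheory.integrable_klFun_rnDeriv_iff hac).mpr hllr
  have hexp' : Integrable (fun x => Real.exp (g x) - 1) Q := hexp.sub (integrable_const 1)
  rw [← integral_rnDeriv_smul hac, InformationTheory.toReal_klDiv_eq_integral_klFun hac,
    ← integral_add hkl hexp']
  exact integral_mono ((integrable_rnDeriv_smul_iff hac).mpr hg) (hkl.add hexp') fun x =>
    mul_le_klFun_add_exp_sub_one ENNReal.toReal_nonneg (g x)

end DonskerVaradhan

section LowerTail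

variable {β : Type*} [MeasurableSpace β] {ν : Measure β} [IsFiniteMeasure ν] {W : β → ℝ} {s : ℝ}

theorem integrable_exp_mul_sub_of_nonneg (hW : AEStronglyMeasurable W ν) (hW0 : ∀ x, 0 ≤ W x)
    (hs : 0 ≤ s) (c : ℝ) : Integrable (fun x => Real.exp (s * (c - W x))) ν := by
  refine .of_bound (Real.continuous_exp.comp_aestronglyMeasurable
    ((aestronglyMeasurable_const.sub hW).const_mul s)) (Real.exp (s * c)) (.of_forall fun x => ?_)
  rw [Real.norm_eq_abs, Real.abs_exp, Real.exp_le_exp]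
  nlinarith [mul_nonneg hs (hW0 x)]

theorem SubGaussian.integral_exp_mul_sub_le {s2 : ℝ} (h : SubGaussian ν W s2)
    (hW0 : ∀ x, 0 ≤ W x) (hs : 0 ≤ s) :
    ∫ x, Real.exp (s * (∫ x', W x' ∂ν - W x)) ∂ν ≤ Real.exp (s2 * s ^ 2 / 2) := by
  -- `SubGaussian` bounds a logarithm of a Bochner integral, which says nothing about the
  -- exponential moment unless the exponential is known to be integrable.
  have hint := integrable_exp_mul_sub_of_nonneg h.1.aestronglyMeasurable hW0 hs (∫ x', W x' ∂ν)
  rcases eq_zero_or_neZero ν with rfl | hν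
  · simpa using (Real.exp_pos _).le
  rw [← Real.log_le_iff_le_exp (integral_exp_pos hint)]
  simpa [neg_mul, ← mul_neg, neg_sub] using h.2 (-s)

end LowerTail

theorem le_sqrt_of_forall_mul_le {c V D : ℝ}
    (h : ∀ s : ℝ, 0 ≤ s → s * c ≤ s ^ 2 * V / 2 + D) : c ≤ √(2 * V * D) := by
  rcases le_or_gt c 0 with hc | hc
  · exact hc.trans (Real.sqrt_nonneg _)
  have hD : 0 ≤ D := by simpa using h 0 le_rfl
  have hV : 0 < V := by
    by_contra! hV
    have hs := h ((D + 1) / c) (by positivity)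
    rw [div_mul_cancel₀ _ hc.ne'] at hs
    nlinarith [mul_nonneg (sq_nonneg ((D + 1) / c)) (neg_nonneg.mpr hV)]
  have hs := h (c / V) (by positivity)
  field_simp at hs
  exact Real.le_sqrt_of_sq_le (by linarith)

section Decoupling

variable {𝒯 𝒳 : Type*} [MeasurableSpace 𝒯] [MeasurableSpace 𝒳]
  {η : Kernel 𝒯 𝒳} {W : 𝒯 × 𝒳 → ℝ} {σ2 : 𝒯 → ℝ} {s : ℝ}

/-- The exponent `s (M t - W (t, x)) - s² σ² t / 2`, where `M t` is the mean of `W (t, ·)` under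
`η t`: when `W (t, ·)` is `σ² t`-sub-Gaussian under `η t` and `s ≥ 0`, its exponential has
`η t`-mean at most `1`. It is the test function fed to the Donsker–Varadhan inequality. -/
def lowerTailExponent (η : Kernel 𝒯 𝒳) (W : 𝒯 × 𝒳 → ℝ) (σ2 : 𝒯 → ℝ) (s : ℝ) (w : 𝒯 × 𝒳) : ℝ :=
  s * (∫ x, W (w.1, x) ∂(η w.1) - W w) - s ^ 2 * σ2 w.1 / 2

theorem measurable_integral_kernel_section [IsSFiniteKernel η] (hW : Measurable W) :
    Measurable fun t => ∫ x, W (t, x) ∂(η t) :=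
  hW.stronglyMeasurable.integral_kernel_prod_right'.measurable

theorem measurable_lowerTailExponent [IsSFiniteKernel η] (hW : Measurable W)
    (hσ2 : Measurable σ2) (s : ℝ) : Measurable (lowerTailExponent η W σ2 s) := by
  have hM := measurable_integral_kernel_section (η := η) hW
  exact (((hM.comp measurable_fst).sub hW).const_mul s).sub
    (((hσ2.comp measurable_fst).const_mul _).div_const 2)

theorem exp_lowerTailExponent (t : 𝒯) (x : 𝒳) :
    Real.exp (lowerTailExponent η W σ2 s (t, x))
      = Real.exp (s * (∫ x', W (t, x') ∂(η t) - W (t, x)))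
        * (Real.exp (σ2 t * s ^ 2 / 2))⁻¹ := by
  rw [lowerTailExponent, ← Real.exp_neg, ← Real.exp_add]
  ring_nf

theorem integral_exp_lowerTailExponent_le_one {t : 𝒯} [IsFiniteMeasure (η t)]
    (h : SubGaussian (η t) (fun x => W (t, x)) (σ2 t)) (hW0 : ∀ w, 0 ≤ W w) (hs : 0 ≤ s) :
    ∫ x, Real.exp (lowerTailExponent η W σ2 s (t, x)) ∂(η t) ≤ 1 := by
  simp_rw [exp_lowerTailExponent, integral_mul_const]
  exact mul_inv_le_one_of_le₀ (h.integral_exp_mul_sub_le (fun x => hW0 _) hs) (Real.exp_pos _).le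

theorem integrable_exp_lowerTailExponent {ρ : Measure 𝒯} [IsFiniteMeasure ρ] [IsFiniteKernel η]
    (hW : Measurable W) (hW0 : ∀ w, 0 ≤ W w) (hσ2 : Measurable σ2)
    (hSG : ∀ᵐ t ∂ρ, SubGaussian (η t) (fun x => W (t, x)) (σ2 t)) (hs : 0 ≤ s) :
    Integrable (fun w => Real.exp (lowerTailExponent η W σ2 s w)) (ρ ⊗ₘ η) := by
  have hmeas := (measurable_lowerTailExponent (η := η) hW hσ2 s).exp
  rw [Measure.integrable_compProd_iff hmeas.aestronglyMeasurable]
  refine ⟨.of_forall fun t => ?_, ?_⟩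
  · simp_rw [exp_lowerTailExponent]
    exact (integrable_exp_mul_sub_of_nonneg
      (hW.comp measurable_prodMk_left).aestronglyMeasurable (fun x => hW0 _) hs _).mul_const _
  · refine .of_bound (hmeas.norm.stronglyMeasurable.integral_kernel_prod_right'
      |>.aestronglyMeasurable) 1 (hSG.mono fun t h => ?_)
    simp only [Real.norm_eq_abs, Real.abs_exp]
    rw [abs_of_nonneg (integral_nonneg fun x => (Real.exp_pos _).le)]
    exact integral_exp_lowerTailExponent_le_one h hW0 hs

theorem integral_exp_lowerTailExponent_sub_one_nonpos {ρ : Measure 𝒯} [IsFiniteMeasure ρ]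
    [IsMarkovKernel η] (hW : Measurable W) (hW0 : ∀ w, 0 ≤ W w) (hσ2 : Measurable σ2)
    (hSG : ∀ᵐ t ∂ρ, SubGaussian (η t) (fun x => W (t, x)) (σ2 t)) (hs : 0 ≤ s) :
    ∫ w, (Real.exp (lowerTailExponent η W σ2 s w) - 1) ∂(ρ ⊗ₘ η) ≤ 0 := by
  have hexp := integrable_exp_lowerTailExponent hW hW0 hσ2 hSG hs
  have hexp' : Integrable (fun w => Real.exp (lowerTailExponent η W σ2 s w) - 1) (ρ ⊗ₘ η) :=
    hexp.sub (integrable_const 1)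
  rw [Measure.integral_compProd hexp']
  have hsec := ((Measure.integrable_compProd_iff hexp.aestronglyMeasurable).mp hexp).1
  refine integral_nonpos_of_ae ?_
  filter_upwards [hSG, hsec] with t h hint
  rw [integral_sub hint (integrable_const 1)]
  simpa using integral_exp_lowerTailExponent_le_one h hW0 hs

variable {P : Measure (𝒯 × 𝒳)}

theorem integrable_lowerTailExponent (hM : Integrable (fun t => ∫ x, W (t, x) ∂(η t)) P.fst)
    (hWint : Integrable W P) (hσ2int : Integrable σ2 P.fst) (s : ℝ) :
    Integrable (lowerTailExponent η W σ2 s) P :=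
  (((hM.comp_measurable measurable_fst).sub hWint).const_mul s).sub
    (((hσ2int.comp_measurable measurable_fst).const_mul (s ^ 2)).div_const 2)

theorem integral_lowerTailExponent (hM : Integrable (fun t => ∫ x, W (t, x) ∂(η t)) P.fst)
    (hWint : Integrable W P) (hσ2int : Integrable σ2 P.fst) (s : ℝ) :
    ∫ w, lowerTailExponent η W σ2 s w ∂P
      = s * (∫ t, ∫ x, W (t, x) ∂(η t) ∂P.fst - ∫ w, W w ∂P)
        - s ^ 2 * (∫ t, σ2 t ∂P.fst) / 2 := by
  have hMP : Integrable (fun w => ∫ x, W (w.1, x) ∂(η w.1)) P := hM.comp_measurable measurable_fst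
  have hσ2P : Integrable (fun w => σ2 w.1) P := hσ2int.comp_measurable measurable_fst
  rw [Measure.fst, integral_map measurable_fst.aemeasurable hM.aestronglyMeasurable,
    integral_map measurable_fst.aemeasurable hσ2int.aestronglyMeasurable,
    ← integral_sub hMP hWint, ← integral_const_mul, ← integral_const_mul, ← integral_div]
  exact integral_sub ((hMP.sub hWint).const_mul s) ((hσ2P.const_mul _).div_const 2)

variable [IsFiniteMeasure P] [IsMarkovKernel η]

theorem integrable_integral_kernel
    (hKL : InformationTheory.klDiv P (P.fst ⊗ₘ η) ≠ ∞) (hW : Measurable W) (hW0 : ∀ w, 0 ≤ W w)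
    (hWint : Integrable W P) (hσ2 : Measurable σ2) (hσ2int : Integrable σ2 P.fst)
    (hSG : ∀ᵐ t ∂P.fst, SubGaussian (η t) (fun x => W (t, x)) (σ2 t)) :
    Integrable (fun t => ∫ x, W (t, x) ∂(η t)) P.fst := by
  have hσ2P : Integrable (fun w => σ2 w.1) P := hσ2int.comp_measurable measurable_fst
  have hE : Integrable (lowerTailExponent η W σ2 1) P := by
    refine integrable_of_le_of_integrable_exp hKL (measurable_lowerTailExponent hW hσ2 1)
      (hWint.neg.sub (hσ2P.div_const 2)) (.of_forall fun w => ?_)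
      (integrable_exp_lowerTailExponent hW hW0 hσ2 hSG zero_le_one)
    have hM0 : 0 ≤ ∫ x, W (w.1, x) ∂(η w.1) := integral_nonneg fun x => hW0 _
    simp only [lowerTailExponent, Pi.sub_apply, Pi.neg_apply]
    linarith
  have hM := measurable_integral_kernel_section (η := η) hW
  rw [Measure.fst, integrable_map_measure hM.aestronglyMeasurable measurable_fst.aemeasurable]
  refine ((hE.add hWint).add (hσ2P.div_const 2)).congr (.of_forall fun w => ?_)
  simp only [lowerTailExponent, Pi.add_apply, Function.comp_apply]
  ring

theorem integral_integral_le_integral_add_sqrt_klDiv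
    (hKL : InformationTheory.klDiv P (P.fst ⊗ₘ η) ≠ ∞) (hW : Measurable W) (hW0 : ∀ w, 0 ≤ W w)
    (hWint : Integrable W P) (hσ2 : Measurable σ2) (hσ2int : Integrable σ2 P.fst)
    (hSG : ∀ᵐ t ∂P.fst, SubGaussian (η t) (fun x => W (t, x)) (σ2 t)) :
    ∫ t, ∫ x, W (t, x) ∂(η t) ∂P.fst
      ≤ ∫ w, W w ∂P
        + √(2 * (∫ t, σ2 t ∂P.fst) * (InformationTheory.klDiv P (P.fst ⊗ₘ η)).toReal) := by
  have hM := integrable_integral_kernel hKL hW hW0 hWint hσ2 hσ2int hSG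
  rw [← sub_le_iff_le_add']
  refine le_sqrt_of_forall_mul_le fun s hs => ?_
  have hDV := integral_le_toReal_klDiv_add_integral_exp_sub_one hKL
    (integrable_lowerTailExponent hM hWint hσ2int s)
    (integrable_exp_lowerTailExponent hW hW0 hσ2 hSG hs)
  have hnonpos := integral_exp_lowerTailExponent_sub_one_nonpos hW hW0 hσ2 hSG hs
  rw [integral_lowerTailExponent hM hWint hσ2int] at hDV
  linarith

end Decoupling

section MutualInformation

theorem klDiv_eq_informationTheory_klDiv_s17 {β : Type*} [MeasurableSpace β] {P Q : Measure β}
    (h : P Set.univ = Q Set.univ) : klDiv P Q = InformationTheory.klDiv P Q := by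
  have hreal : P.real Set.univ = Q.real Set.univ := congrArg ENNReal.toReal h
  by_cases hPQ : P ≪ Q ∧ Integrable (llr P Q) P
  · rw [InformationTheory.klDiv_of_ac_of_integrable hPQ.1 hPQ.2, hreal, add_sub_cancel_right]
    exact if_pos hPQ
  · rw [not_not.mp (mt InformationTheory.klDiv_ne_top_iff.mp hPQ)]
    exact if_neg hPQ

theorem mutualInfo_eq_informationTheory_klDiv {Ω 𝒰 𝒱 : Type*} [MeasurableSpace Ω]
    [MeasurableSpace 𝒰] [MeasurableSpace 𝒱] {μ : Measure Ω} [IsProbabilityMeasure μ]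
    {U : Ω → 𝒰} {V : Ω → 𝒱} (hU : Measurable U) (hV : Measurable V) :
    mutualInfo μ U V
      = InformationTheory.klDiv (μ.map fun ω => (U ω, V ω)) ((μ.map U).prod (μ.map V)) := by
  have := Measure.isProbabilityMeasure_map hU.aemeasurable (μ := μ)
  have := Measure.isProbabilityMeasure_map hV.aemeasurable (μ := μ)
  have := Measure.isProbabilityMeasure_map (hU.prodMk hV).aemeasurable (μ := μ)
  exact klDiv_eq_informationTheory_klDiv_s17 (by simp only [measure_univ])

theorem klDiv_map_of_leftInverse {α β : Type*} [MeasurableSpace α] [MeasurableSpace β]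
    {P Q : Measure α} [IsFiniteMeasure P] [IsFiniteMeasure Q] {g : α → β} {h : β → α}
    (hg : Measurable g) (hh : Measurable h) (hhg : Function.LeftInverse h g) :
    InformationTheory.klDiv (P.map g) (Q.map g) = InformationTheory.klDiv P Q := by
  refine (InformationTheory.klDiv_map_le P Q hg).antisymm ?_
  simpa [Measure.map_map hh hg, hhg.comp_eq_id] using
    InformationTheory.klDiv_map_le (P.map g) (Q.map g) hh

theorem prod_compProd_prodMkRight {𝒰 𝒱 𝒴 : Type*} [MeasurableSpace 𝒰] [MeasurableSpace 𝒱]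
    [MeasurableSpace 𝒴] (ν : Measure 𝒰) [SFinite ν] (ρ : Measure 𝒴) [SFinite ρ]
    (κ : Kernel 𝒰 𝒱) [IsSFiniteKernel κ] :
    (ν.prod ρ) ⊗ₘ κ.prodMkRight 𝒴
      = ((ν ⊗ₘ κ).prod ρ).map fun w => ((w.1.1, w.2), w.1.2) := by
  refine Measure.ext_of_lintegral _ fun g hg => ?_
  have hsec : Measurable fun q : 𝒰 × 𝒴 => ∫⁻ v, g (q, v) ∂(κ.prodMkRight 𝒴 q) :=
    hg.lintegral_kernel_prod_right'
  rw [lintegral_map hg (by fun_prop), Measure.lintegral_compProd hg,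
    lintegral_prod_symm' _ hsec, lintegral_prod_symm' _ (by fun_prop)]
  refine lintegral_congr fun y => ?_
  rw [Measure.lintegral_compProd (by fun_prop)]
  rfl

variable {Ω 𝒳 𝒴 𝒵 : Type*} [MeasurableSpace Ω] [MeasurableSpace 𝒳] [StandardBorelSpace 𝒳]
  [Nonempty 𝒳] [MeasurableSpace 𝒴] [MeasurableSpace 𝒵]

/-- The conditional mutual information `I(X; Y | Z)`, encoded as the divergence of the law of
`((Z, Y), X)` from the law obtained by redrawing `X` given `Z` alone. -/
def condMutualInfo (μ : Measure Ω) [IsFiniteMeasure μ] (X : Ω → 𝒳) (Y : Ω → 𝒴) (Z : Ω → 𝒵) :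
    ℝ≥0∞ :=
  InformationTheory.klDiv (μ.map fun ω => ((Z ω, Y ω), X ω))
    ((μ.map fun ω => (Z ω, Y ω)) ⊗ₘ (condDistrib X Z μ).prodMkRight 𝒴)

theorem map_prod_compProd_condDistrib {μ : Measure Ω} [IsFiniteMeasure μ] {X : Ω → 𝒳}
    {Z : Ω → 𝒵} (hX : Measurable X) (hZ : Measurable Z) (ρ : Measure 𝒴) [SFinite ρ] :
    ((μ.map Z).prod ρ) ⊗ₘ (condDistrib X Z μ).prodMkRight 𝒴
      = (μ.prod ρ).map fun w => ((Z w.1, w.2), X w.1) := by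
  rw [prod_compProd_prodMkRight, compProd_map_condDistrib hX.aemeasurable]
  nth_rewrite 1 [← Measure.map_id (μ := ρ)]
  rw [Measure.map_prod_map _ _ (hZ.prodMk hX) measurable_id,
    Measure.map_map (by fun_prop) (by fun_prop)]
  rfl

variable {μ : Measure Ω} {X : Ω → 𝒳} {Y : Ω → 𝒴} {Z : Ω → 𝒵}

theorem condMutualInfo_eq_zero_of_condIndepFun [IsFiniteMeasure μ] [StandardBorelSpace Ω]
    [StandardBorelSpace 𝒴] [Nonempty 𝒴] (hX : Measurable X) (hY : Measurable Y) (hZ : Measurable Z)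
    (h : CondIndepFun (MeasurableSpace.comap Z inferInstance) hZ.comap_le Y X μ) :
    condMutualInfo μ X Y Z = 0 := by
  have hcond := (condIndepFun_iff_condDistrib_prod_ae_eq_prodMkRight hX hY hZ).mp h
  rw [condMutualInfo, ← Measure.compProd_congr hcond, compProd_map_condDistrib hX.aemeasurable,
    InformationTheory.klDiv_self]

variable [IsProbabilityMeasure μ]

theorem mutualInfo_add_condMutualInfo_eq_klDiv (hX : Measurable X) (hY : Measurable Y)
    (hZ : Measurable Z) :
    mutualInfo μ Z Y + condMutualInfo μ X Y Z
      = InformationTheory.klDiv (μ.map fun ω => ((Z ω, Y ω), X ω))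
          ((μ.prod (μ.map Y)).map fun w => ((Z w.1, w.2), X w.1)) := by
  rw [mutualInfo_eq_informationTheory_klDiv hZ hY, condMutualInfo,
    ← compProd_map_condDistrib (X := fun ω => (Z ω, Y ω)) hX.aemeasurable,
    ← InformationTheory.klDiv_compProd_eq_add, map_prod_compProd_condDistrib hX hZ]

theorem mutualInfo_add_condMutualInfo_comm [StandardBorelSpace 𝒵] [Nonempty 𝒵]
    (hX : Measurable X) (hY : Measurable Y) (hZ : Measurable Z) :
    mutualInfo μ X Y + condMutualInfo μ Z Y X = mutualInfo μ Z Y + condMutualInfo μ X Y Z := by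
  rw [mutualInfo_add_condMutualInfo_eq_klDiv hZ hY hX,
    mutualInfo_add_condMutualInfo_eq_klDiv hX hY hZ,
    ← klDiv_map_of_leftInverse (g := fun w : (𝒳 × 𝒴) × 𝒵 => ((w.2, w.1.2), w.1.1))
      (h := fun w : (𝒵 × 𝒴) × 𝒳 => ((w.2, w.1.2), w.1.1)) (by fun_prop) (by fun_prop)
      fun _ => rfl,
    Measure.map_map (by fun_prop) (by fun_prop), Measure.map_map (by fun_prop) (by fun_prop)]
  rfl

theorem mutualInfo_eq_add_condMutualInfo_of_condIndepFun [StandardBorelSpace Ω]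
    [StandardBorelSpace 𝒴] [Nonempty 𝒴] [StandardBorelSpace 𝒵] [Nonempty 𝒵]
    (hX : Measurable X) (hY : Measurable Y) (hZ : Measurable Z)
    (hMarkov : CondIndepFun (MeasurableSpace.comap X inferInstance) hX.comap_le Y Z μ) :
    mutualInfo μ X Y = mutualInfo μ Z Y + condMutualInfo μ X Y Z := by
  rw [← mutualInfo_add_condMutualInfo_comm hX hY hZ,
    condMutualInfo_eq_zero_of_condIndepFun hZ hY hX hMarkov, add_zero]

end MutualInformation

section ExcessRisk

variable {Ω 𝒳 𝒴 𝒵 : Type*} [MeasurableSpace Ω] [MeasurableSpace 𝒳] {μ : Measure Ω}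

theorem integral_condDistrib_le_add_sqrt_condMutualInfo [StandardBorelSpace 𝒳] [Nonempty 𝒳]
    [MeasurableSpace 𝒴] [MeasurableSpace 𝒵] [IsFiniteMeasure μ] {X : Ω → 𝒳} {Y : Ω → 𝒴} {Z : Ω → 𝒵}
    (hX : Measurable X) (hY : Measurable Y) (hZ : Measurable Z) {W : 𝒴 × 𝒳 → ℝ}
    (hW : Measurable W) (hW0 : ∀ w, 0 ≤ W w) (hWint : Integrable (fun ω => W (Y ω, X ω)) μ)
    {σ2 : 𝒴 → ℝ} (hσ2 : Measurable σ2) (hσ2int : Integrable (fun ω => σ2 (Y ω)) μ)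
    (hSG : ∀ᵐ zy ∂(μ.map fun ω => (Z ω, Y ω)),
      SubGaussian (condDistrib X Z μ zy.1) (fun x => W (zy.2, x)) (σ2 zy.2))
    (hfin : condMutualInfo μ X Y Z ≠ ∞) :
    Integrable (fun ω => ∫ x, W (Y ω, x) ∂(condDistrib X Z μ (Z ω))) μ ∧
      ∫ ω, ∫ x, W (Y ω, x) ∂(condDistrib X Z μ (Z ω)) ∂μ
        ≤ ∫ ω, W (Y ω, X ω) ∂μ
          + √(2 * (∫ ω, σ2 (Y ω) ∂μ) * (condMutualInfo μ X Y Z).toReal) := by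
  have hZY : Measurable fun ω => (Z ω, Y ω) := hZ.prodMk hY
  have hZYX : Measurable fun ω => ((Z ω, Y ω), X ω) := hZY.prodMk hX
  let V : (𝒵 × 𝒴) × 𝒳 → ℝ := fun w => W (w.1.2, w.2)
  have hV : Measurable V := by fun_prop
  have hσ2' : Measurable fun zy : 𝒵 × 𝒴 => σ2 zy.2 := by fun_prop
  have hM := measurable_integral_kernel_section (η := (condDistrib X Z μ).prodMkRight 𝒴) hV
  have hfst : (μ.map fun ω => ((Z ω, Y ω), X ω)).fst = μ.map fun ω => (Z ω, Y ω) :=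
    Measure.fst_map_prodMk hX
  have hVint := (integrable_map_measure hV.aestronglyMeasurable hZYX.aemeasurable).mpr hWint
  have hσ2int' := (integrable_map_measure hσ2'.aestronglyMeasurable hZY.aemeasurable).mpr hσ2int
  rw [condMutualInfo, ← hfst] at hfin
  rw [← hfst] at hSG hσ2int'
  have hMint := integrable_integral_kernel hfin hV (fun w => hW0 _) hVint hσ2' hσ2int' hSG
  have hle := integral_integral_le_integral_add_sqrt_klDiv hfin hV (fun w => hW0 _) hVint hσ2'
    hσ2int' hSG
  rw [hfst, integral_map hZY.aemeasurable hM.aestronglyMeasurable,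
    integral_map hZY.aemeasurable hσ2'.aestronglyMeasurable,
    integral_map hZYX.aemeasurable hV.aestronglyMeasurable] at hle
  rw [hfst] at hMint
  exact ⟨(integrable_map_measure hM.aestronglyMeasurable hZY.aemeasurable).mp hMint, hle⟩

variable {p r : ℕ} {l : (Fin p → ℝ) → (Fin p → ℝ) → ℝ} {Y : Ω → Fin p → ℝ} {Z : Ω → Fin r → ℝ}

theorem minRisk_le_lintegral_kernel [SFinite μ]
    (hl : Measurable fun yy : (Fin p → ℝ) × (Fin p → ℝ) => l yy.1 yy.2)
    (hY : Measurable Y) (hZ : Measurable Z) (κ : Kernel (Fin r → ℝ) (Fin p → ℝ))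
    [IsMarkovKernel κ] :
    minRisk μ l Y Z ≤ ∫⁻ ω, ∫⁻ y', ENNReal.ofReal (l (Y ω) y') ∂(κ (Z ω)) ∂μ := by
  -- `F z` pushes a uniform seed `u` to `κ z`; some seed does at least as well as the average one.
  obtain ⟨F, hF, hFκ⟩ := κ.exists_measurable_map_eq_unitInterval
  calc minRisk μ l Y Z
      = ∫⁻ _ : unitInterval, minRisk μ l Y Z := by simp
    _ ≤ ∫⁻ u : unitInterval, ∫⁻ ω, ENNReal.ofReal (l (Y ω) (F (Z ω) u)) ∂μ :=
        lintegral_mono fun u => iInf₂_le (fun z => F z u) (by fun_prop)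
    _ = ∫⁻ ω, (∫⁻ u : unitInterval, ENNReal.ofReal (l (Y ω) (F (Z ω) u))) ∂μ :=
        lintegral_lintegral_swap (Measurable.aemeasurable (by fun_prop))
    _ = ∫⁻ ω, ∫⁻ y', ENNReal.ofReal (l (Y ω) y') ∂(κ (Z ω)) ∂μ :=
        lintegral_congr fun ω => by
          rw [← hFκ, lintegral_map (by fun_prop) hF.of_uncurry_left]

theorem minRisk_le_ofReal_integral_kernel [SFinite μ]
    (hl : Measurable fun yy : (Fin p → ℝ) × (Fin p → ℝ) => l yy.1 yy.2)
    (hl0 : ∀ y y', 0 ≤ l y y') (hY : Measurable Y) (hZ : Measurable Z)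
    (κ : Kernel (Fin r → ℝ) 𝒳) [IsMarkovKernel κ] {f : 𝒳 → Fin p → ℝ} (hf : Measurable f)
    (hlf : ∀ᵐ ω ∂μ, Integrable (fun x => l (Y ω) (f x)) (κ (Z ω)))
    (hint : Integrable (fun ω => ∫ x, l (Y ω) (f x) ∂(κ (Z ω))) μ) :
    minRisk μ l Y Z ≤ ENNReal.ofReal (∫ ω, ∫ x, l (Y ω) (f x) ∂(κ (Z ω)) ∂μ) := by
  have := Kernel.IsMarkovKernel.map κ hf
  calc minRisk μ l Y Z
      ≤ ∫⁻ ω, ∫⁻ y', ENNReal.ofReal (l (Y ω) y') ∂(κ.map f (Z ω)) ∂μ :=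
        minRisk_le_lintegral_kernel hl hY hZ (κ.map f)
    _ = ∫⁻ ω, ∫⁻ x, ENNReal.ofReal (l (Y ω) (f x)) ∂(κ (Z ω)) ∂μ :=
        lintegral_congr fun ω => by rw [Kernel.map_apply _ hf, lintegral_map (by fun_prop) hf]
    _ = ∫⁻ ω, ENNReal.ofReal (∫ x, l (Y ω) (f x) ∂(κ (Z ω))) ∂μ :=
        lintegral_congr_ae <| hlf.mono fun ω h =>
          (ofReal_integral_eq_lintegral_ofReal h (.of_forall fun x => hl0 _ _)).symm
    _ = ENNReal.ofReal (∫ ω, ∫ x, l (Y ω) (f x) ∂(κ (Z ω)) ∂μ) :=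
        (ofReal_integral_eq_lintegral_ofReal hint
          (.of_forall fun ω => integral_nonneg fun x => hl0 _ _)).symm

theorem minRisk_le_add_sqrt_condMutualInfo [StandardBorelSpace 𝒳] [Nonempty 𝒳]
    [IsFiniteMeasure μ] {X : Ω → 𝒳}
    (hX : Measurable X) (hY : Measurable Y) (hZ : Measurable Z)
    (hl : Measurable fun yy : (Fin p → ℝ) × (Fin p → ℝ) => l yy.1 yy.2)
    (hl0 : ∀ y y', 0 ≤ l y y') {f : 𝒳 → Fin p → ℝ} (hf : Measurable f)
    {σ2 : (Fin p → ℝ) → ℝ} (hσ2 : Measurable σ2) (hσ2int : Integrable (fun ω => σ2 (Y ω)) μ)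
    (hSG : ∀ᵐ zy ∂(μ.map fun ω => (Z ω, Y ω)),
      SubGaussian (condDistrib X Z μ zy.1) (fun x => l zy.2 (f x)) (σ2 zy.2))
    (hfin : condMutualInfo μ X Y Z ≠ ∞) :
    minRisk μ l Y Z ≤ ∫⁻ ω, ENNReal.ofReal (l (Y ω) (f (X ω))) ∂μ
      + ENNReal.ofReal √(2 * (∫ ω, σ2 (Y ω) ∂μ) * (condMutualInfo μ X Y Z).toReal) := by
  by_cases hrisk : ∫⁻ ω, ENNReal.ofReal (l (Y ω) (f (X ω))) ∂μ = ∞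
  · simp [hrisk]
  have hlf : Measurable fun w : (Fin p → ℝ) × 𝒳 => l w.1 (f w.2) := by fun_prop
  have hlfX : Integrable (fun ω => l (Y ω) (f (X ω))) μ :=
    (lintegral_ofReal_ne_top_iff_integrable
      (hlf.comp (hY.prodMk hX)).aestronglyMeasurable (.of_forall fun ω => hl0 _ _)).mp hrisk
  obtain ⟨hint, hle⟩ := integral_condDistrib_le_add_sqrt_condMutualInfo hX hY hZ hlf
    (fun w => hl0 _ _) hlfX hσ2 hσ2int hSG hfin
  have hsec := (ae_of_ae_map (hZ.prodMk hY).aemeasurable hSG).mono fun ω h => h.1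
  rw [← ofReal_integral_eq_lintegral_ofReal hlfX (.of_forall fun ω => hl0 _ _),
    ← ENNReal.ofReal_add (integral_nonneg fun ω => hl0 _ _) (Real.sqrt_nonneg _)]
  exact (minRisk_le_ofReal_integral_kernel hl hl0 hY hZ _ hf hsec hint).trans
    (ENNReal.ofReal_le_ofReal hle)

end ExcessRisk

theorem excess_risk_mutualInfo_bound_general
    {Ω 𝒳 : Type*} [MeasurableSpace Ω] [StandardBorelSpace Ω] [MeasurableSpace 𝒳]
    [StandardBorelSpace 𝒳] [Nonempty 𝒳] (μ : Measure Ω) [IsProbabilityMeasure μ] {p r : ℕ}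
    (Y : Ω → Fin p → ℝ) (X : Ω → 𝒳) (Z : Ω → Fin r → ℝ)
    (hY : Measurable Y) (hX : Measurable X) (hZ : Measurable Z)
    (l : (Fin p → ℝ) → (Fin p → ℝ) → ℝ)
    (hl : Measurable fun yy : (Fin p → ℝ) × (Fin p → ℝ) => l yy.1 yy.2)
    (hl0 : ∀ y y', 0 ≤ l y y')
    (hMarkov : CondIndepFun (MeasurableSpace.comap X inferInstance) hX.comap_le Y Z μ)
    (f : 𝒳 → Fin p → ℝ) (hf : Measurable f)
    (σ2 : (Fin p → ℝ) → ℝ) (hσ2meas : Measurable σ2)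
    (hσ2int : Integrable (fun ω => σ2 (Y ω)) μ)
    (hSG : ∀ᵐ yz ∂(μ.map fun ω => (Y ω, Z ω)),
      SubGaussian (condDistrib X Z μ yz.2) (fun x => l yz.1 (f x)) (σ2 yz.1))
    (hfin : mutualInfo μ X Y ≠ ⊤) :
    minRisk μ l Y Z - ∫⁻ ω, ENNReal.ofReal (l (Y ω) (f (X ω))) ∂μ
      ≤ ENNReal.ofReal (Real.sqrt (2 * (∫ ω, σ2 (Y ω) ∂μ)
          * (mutualInfo μ X Y - mutualInfo μ Z Y).toReal)) := by
  have hchain := mutualInfo_eq_add_condMutualInfo_of_condIndepFun hX hY hZ hMarkov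
  obtain ⟨hIZ, hIC⟩ := ENNReal.add_ne_top.mp (hchain ▸ hfin)
  have hswap : (μ.map fun ω => (Y ω, Z ω))
      = (μ.map fun ω => (Z ω, Y ω)).map MeasurableEquiv.prodComm :=
    (Measure.map_map MeasurableEquiv.prodComm.measurable (hZ.prodMk hY)).symm
  rw [hswap, MeasurableEquiv.prodComm.measurableEmbedding.ae_map_iff] at hSG
  rw [hchain, ENNReal.add_sub_cancel_left hIZ, tsub_le_iff_left]
  exact minRisk_le_add_sqrt_condMutualInfo hX hY hZ hl hl0 hf hσ2meas hσ2int hSG hIC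

/-- Mutual-information bound on the excess minimum risk for a Markov
chain `Y → X → Z`: if the optimal estimator `f` of `Y` from `X` is such that `l(y, f(X))`
is `σ²(y)`-sub-Gaussian under `P_{X|Z=z}` and `P_{X|Z=z,Y=y}` for `P_{Y,Z}`-a.e. `(y,z)`,
`E[σ²(Y)] < ∞`, and `I(X;Y) < ∞`, then
`L*_l(Y|Z) - L*_l(Y|X) ≤ √(2 E[σ²(Y)] (I(X;Y) - I(Z;Y)))`. -/
theorem excess_risk_mutualInfo_bound
    {Ω : Type*} [MeasurableSpace Ω] [StandardBorelSpace Ω] [Nonempty Ω]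
    (μ : Measure Ω) [IsProbabilityMeasure μ] {p q r : ℕ}
    (Y : Ω → Fin p → ℝ) (X : Ω → Fin q → ℝ) (Z : Ω → Fin r → ℝ)
    (hY : Measurable Y) (hX : Measurable X) (hZ : Measurable Z)
    (l : (Fin p → ℝ) → (Fin p → ℝ) → ℝ)
    (hl : Measurable fun yy : (Fin p → ℝ) × (Fin p → ℝ) => l yy.1 yy.2)
    (hl0 : ∀ y y', 0 ≤ l y y')
    (hMarkov : CondIndepFun (MeasurableSpace.comap X inferInstance) hX.comap_le Y Z μ)
    (f : (Fin q → ℝ) → Fin p → ℝ) (hf : Measurable f)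
    (hopt : ∫⁻ ω, ENNReal.ofReal (l (Y ω) (f (X ω))) ∂μ = minRisk μ l Y X)
    (σ2 : (Fin p → ℝ) → ℝ) (hσ2meas : Measurable σ2) (hσ2nonneg : ∀ y, 0 ≤ σ2 y)
    (hσ2int : Integrable (fun ω => σ2 (Y ω)) μ)
    (hSG : ∀ᵐ yz ∂(μ.map fun ω => (Y ω, Z ω)),
      SubGaussian (condDistrib X Z μ yz.2) (fun x => l yz.1 (f x)) (σ2 yz.1)
        ∧ SubGaussian (condDistrib X (fun ω => (Y ω, Z ω)) μ yz)
            (fun x => l yz.1 (f x)) (σ2 yz.1))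
    (hfin : mutualInfo μ X Y ≠ ⊤) :
    minRisk μ l Y Z - minRisk μ l Y X
      ≤ ENNReal.ofReal (Real.sqrt (2 * (∫ ω, σ2 (Y ω) ∂μ)
          * (mutualInfo μ X Y - mutualInfo μ Z Y).toReal)) :=
  hopt ▸ excess_risk_mutualInfo_bound_general μ Y X Z hY hX hZ l hl hl0 hMarkov f hf σ2 hσ2meas
    hσ2int (hSG.mono fun _ h => h.1) hfin
end
end
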